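/- arXiv:1103.3938 — 3 statements merged into one kernel-verified Lean document; each statement's English description precedes it below -/
import Mathlib

section
/- For n ≥ 3 let q_n = ((−1)^{n+1} + 2ⁿ)/3, let g_n be the number of ordered pairs (A,B) of disjoint subsets of [n] with ∑_{i∈B} 2^i − ∑_{i∈A} 2^i = q_n + 1, and let h_n be the number of ordered pairs (A,B) of disjoint subsets of [n] with ∑_{i∈B} 2^i − ∑_{i∈A} 2^i = q_n − 1. Then for every odd n ≥ 3: g_{n+1} = g_n + h_n and h_{n+1} = h_n; and for every even n ≥ 4: g_{n+1} = g_n and h_{n+1} = g_n + h_n. -/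
open Finset

/-- The strict part of a (total antisymmetric) order on subsets. -/
def cpLT {n : ℕ} (le : Finset (Fin n) → Finset (Fin n) → Prop)
    (A B : Finset (Fin n)) : Prop :=
  le A B ∧ A ≠ B

/-- `le` is a comparative probability order on `[n]`: a linear (total,
antisymmetric, transitive) order on the powerset of `[n]` with `∅ ≺ A` for
nonempty `A`, satisfying de Finetti's axiom. -/
def IsCPO {n : ℕ} (le : Finset (Fin n) → Finset (Fin n) → Prop) : Prop :=
  (∀ A B, le A B ∨ le B A) ∧
  (∀ A B, le A B → le B A → A = B) ∧
  (∀ A B C, le A B → le B C → le A C) ∧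
  (∀ A : Finset (Fin n), A ≠ ∅ → cpLT le ∅ A) ∧
  (∀ A B C : Finset (Fin n), Disjoint (A ∪ B) C → (le A B ↔ le (A ∪ C) (B ∪ C)))

/-- `(A,B)` is a critical pair: disjoint, `A ≺ B`, and no `C` with `A ≺ C ≺ B`. -/
def Critical {n : ℕ} (le : Finset (Fin n) → Finset (Fin n) → Prop)
    (A B : Finset (Fin n)) : Prop :=
  Disjoint A B ∧ cpLT le A B ∧ ¬ ∃ C, cpLT le A C ∧ cpLT le C B

/-- `(A,B)` is a flippable pair: critical, and for every `D` disjoint from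
`A ∪ B` the pair `(A ∪ D, B ∪ D)` is adjacent. -/
def Flippable {n : ℕ} (le : Finset (Fin n) → Finset (Fin n) → Prop)
    (A B : Finset (Fin n)) : Prop :=
  Critical le A B ∧
  ∀ D : Finset (Fin n), Disjoint D (A ∪ B) →
    ¬ ∃ C, cpLT le (A ∪ D) C ∧ cpLT le C (B ∪ D)

/-- The set of flippable pairs of an order. -/
def FlippablePairs {n : ℕ} (le : Finset (Fin n) → Finset (Fin n) → Prop) :
    Set (Finset (Fin n) × Finset (Fin n)) :=
  {p | Flippable le p.1 p.2}

/-- `le` is (additively) representable by a positive utility vector. -/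
def Representable {n : ℕ} (le : Finset (Fin n) → Finset (Fin n) → Prop) : Prop :=
  ∃ u : Fin n → ℝ, (∀ i, 0 < u i) ∧
    ∀ A B : Finset (Fin n), le A B ↔ ∑ i ∈ A, u i ≤ ∑ i ∈ B, u i

/-- `(X, Y) = (A ∪ D, B ∪ D)` for some `D` disjoint from `A ∪ B`. -/
def FlipRel {n : ℕ} (A B X Y : Finset (Fin n)) : Prop :=
  ∃ D : Finset (Fin n), Disjoint D (A ∪ B) ∧ X = A ∪ D ∧ Y = B ∪ D

/-- The relation obtained from `le` by flipping over the pair `(A,B)`: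
all comparisons between `A ∪ D` and `B ∪ D` (for `D` disjoint from `A ∪ B`)
are reversed, all other comparisons are kept. -/
def flipOrder {n : ℕ} (le : Finset (Fin n) → Finset (Fin n) → Prop)
    (A B : Finset (Fin n)) : Finset (Fin n) → Finset (Fin n) → Prop :=
  fun X Y => (le X Y ∧ ¬ FlipRel A B X Y) ∨ FlipRel A B Y X

/-- Utility (sum of weights) of a subset. -/
def usum {k : ℕ} (m : Fin k → ℕ) (A : Finset (Fin k)) : ℕ := ∑ i ∈ A, m i

/-- The order on subsets induced by a utility vector. -/
def uord {k : ℕ} (m : Fin k → ℕ) : Finset (Fin k) → Finset (Fin k) → Prop :=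
  fun A B => usum m A ≤ usum m B

/-- `qn n = ((−1)^(n+1) + 2^n) / 3` as a natural number. -/
def qn (n : ℕ) : ℕ := if n % 2 = 1 then (2 ^ n + 1) / 3 else (2 ^ n - 1) / 3

/-- The utility vector `m` on `[n+1]` (element `k` corresponds to index `k-1`):
`m_k = 2^k` for `1 ≤ k ≤ n−2`, `m_{n−1} = qn n`, `m_n = 2^(n−1)`, `m_{n+1} = 2^n`. -/
def mvec (n : ℕ) : Fin (n + 1) → ℕ := fun i =>
  if (i : ℕ) + 1 ≤ n - 2 then 2 ^ ((i : ℕ) + 1)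
  else if (i : ℕ) + 1 = n - 1 then qn n
  else if (i : ℕ) + 1 = n then 2 ^ (n - 1)
  else 2 ^ n

/-- Ordered pairs `(A,B)` of disjoint subsets of `[n]` (element `k` has utility
`2^k`, i.e. index `i` has utility `2^(i+1)`) with utility difference `d`. -/
def diffPairs (n : ℕ) (d : ℕ) : Set (Finset (Fin n) × Finset (Fin n)) :=
  {p | Disjoint p.1 p.2 ∧
    ∑ i ∈ p.2, 2 ^ ((i : ℕ) + 1) = (∑ i ∈ p.1, 2 ^ ((i : ℕ) + 1)) + d}

/-- `g n`: the number of disjoint pairs with utility difference `qn n + 1`. -/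
noncomputable def gfun (n : ℕ) : ℕ := (diffPairs n (qn n + 1)).ncard

/-- `h n`: the number of disjoint pairs with utility difference `qn n − 1`. -/
noncomputable def hfun (n : ℕ) : ℕ := (diffPairs n (qn n - 1)).ncard

/-!
A pair of disjoint subsets of `[n]` is a vector of signs, hence its utility difference is `2 * m`
where `m` is the number with these signs as binary digits in `{-1, 0, 1}`. Splitting off the lowest
digit, which is `0` when `m` is even and `±1` when `m` is odd, gives Stern-type recurrences for the
number `c n m` of such expansions: `c (n + 1) (2 * m) = c n m` and
`c (n + 1) (2 * m + 1) = c n (m + 1) + c n m`. Now `q_n = 2 * k + 1` is odd, `g_n = c n (k + 1)`,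
`h_n = c n k`, and `q_{n+1} = 2 * q_n ∓ 1`, which replaces `k` by `2 * k` for odd `n` and by
`2 * k + 1` for even `n`.
-/

section NegPos

variable {ι : Type*} [Fintype ι]

/-- The supports of the negative and of the positive part of a sign vector, in this order: the pair
`(A, B)` of disjoint sets encoded by the vector. -/
def negPos (s : ι → SignType) : Finset ι × Finset ι :=
  (univ.filter (s · = -1), univ.filter (s · = 1))

theorem negPos_injective : Function.Injective (negPos : (ι → SignType) → _) := by
  intro s t hst
  obtain ⟨hneg, hpos⟩ := Prod.ext_iff.1 hst
  ext i
  have hneg_i : s i = -1 ↔ t i = -1 := by simpa [negPos] using Finset.ext_iff.1 hneg i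
  have hpos_i : s i = 1 ↔ t i = 1 := by simpa [negPos] using Finset.ext_iff.1 hpos i
  generalize s i = a at *
  generalize t i = b at *
  decide +revert

theorem disjoint_negPos (s : ι → SignType) : Disjoint (negPos s).1 (negPos s).2 :=
  disjoint_filter.2 fun i _ hi => by simp [hi]

theorem range_negPos : Set.range (negPos : (ι → SignType) → _) = {p | Disjoint p.1 p.2} := by
  classical
  refine (Set.range_subset_iff.2 disjoint_negPos).antisymm ?_
  rintro ⟨A, B⟩ (hAB : Disjoint A B)
  refine ⟨fun i => if i ∈ A then -1 else if i ∈ B then 1 else 0, ?_⟩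
  have hB (i : ι) (hi : i ∈ B) : i ∉ A := Finset.disjoint_right.1 hAB hi
  ext i <;> by_cases i ∈ A <;> by_cases i ∈ B <;> simp_all [negPos]

theorem sum_sign_mul_eq_sum_sub_sum {R : Type*} [NonAssocRing R] (s : ι → SignType) (w : ι → R) :
    ∑ i, (s i : R) * w i = ∑ i ∈ (negPos s).2, w i - ∑ i ∈ (negPos s).1, w i := by
  simp only [negPos, sum_filter, ← sum_sub_distrib]
  refine sum_congr rfl fun i _ => ?_
  cases s i <;> simp

end NegPos

/-- The integer whose binary digits, the lowest one first, are the signs `s 0, s 1, …`. -/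
def signedBinary {n : ℕ} (s : Fin n → SignType) : ℤ :=
  ∑ i, (s i : ℤ) * 2 ^ (i : ℕ)

/-- The number of expansions of `m` with `n` binary digits in `{-1, 0, 1}`; leading zeros are
allowed. -/
def signedBinaryCount (n : ℕ) (m : ℤ) : ℕ :=
  #{s : Fin n → SignType | signedBinary s = m}

theorem signedBinary_cons {n : ℕ} (a : SignType) (s : Fin n → SignType) :
    signedBinary (Fin.cons a s : Fin (n + 1) → SignType) = a + 2 * signedBinary s := by
  simp only [signedBinary, Fin.sum_univ_succ, Fin.cons_zero, Fin.cons_succ, Fin.val_zero,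
    Fin.val_succ, pow_zero, mul_one, mul_sum]
  congr 1
  exact sum_congr rfl fun i _ => by ring

theorem signedBinaryCount_succ (n : ℕ) (m : ℤ) :
    signedBinaryCount (n + 1) m =
      #{s : Fin n → SignType | 2 * signedBinary s = m} +
      (#{s : Fin n → SignType | -1 + 2 * signedBinary s = m} +
        #{s : Fin n → SignType | 1 + 2 * signedBinary s = m}) := by
  have sum_lowest_digit : signedBinaryCount (n + 1) m =
      ∑ a : SignType, #{s : Fin n → SignType | a + 2 * signedBinary s = m} := by
    simp only [signedBinaryCount, card_filter, ← signedBinary_cons]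
    rw [← Fintype.sum_prod_type', ← (Fin.consEquiv fun _ : Fin (n + 1) => SignType).sum_comp]
    rfl
  rw [sum_lowest_digit, SignType.univ_eq, sum_insert (by decide), sum_pair (by decide),
    SignType.coe_zero, SignType.coe_neg_one, SignType.coe_one]
  simp only [zero_add]

theorem signedBinaryCount_succ_two_mul (n : ℕ) (m : ℤ) :
    signedBinaryCount (n + 1) (2 * m) = signedBinaryCount n m := by
  have zero_digit (x : ℤ) : 2 * x = 2 * m ↔ x = m := by lia
  have neg_one_digit (x : ℤ) : ¬ -1 + 2 * x = 2 * m := by lia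
  have one_digit (x : ℤ) : ¬ 1 + 2 * x = 2 * m := by lia
  rw [signedBinaryCount_succ]
  simp only [zero_digit, neg_one_digit, one_digit, filter_false, card_empty, add_zero,
    signedBinaryCount]

theorem signedBinaryCount_succ_two_mul_add_one (n : ℕ) (m : ℤ) :
    signedBinaryCount (n + 1) (2 * m + 1) =
      signedBinaryCount n (m + 1) + signedBinaryCount n m := by
  have zero_digit (x : ℤ) : ¬ 2 * x = 2 * m + 1 := by lia
  have neg_one_digit (x : ℤ) : -1 + 2 * x = 2 * m + 1 ↔ x = m + 1 := by lia
  have one_digit (x : ℤ) : 1 + 2 * x = 2 * m + 1 ↔ x = m := by lia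
  rw [signedBinaryCount_succ]
  simp only [zero_digit, neg_one_digit, one_digit, filter_false, card_empty, zero_add,
    signedBinaryCount]

theorem negPos_mem_diffPairs_two_mul_iff {n : ℕ} (s : Fin n → SignType) (m : ℕ) :
    negPos s ∈ diffPairs n (2 * m) ↔ signedBinary s = m := by
  have hsum : signedBinary s =
      ∑ i ∈ (negPos s).2, 2 ^ (i : ℕ) - ∑ i ∈ (negPos s).1, 2 ^ (i : ℕ) :=
    sum_sign_mul_eq_sum_sub_sum s _
  simp only [diffPairs, Set.mem_ofPred_eq, disjoint_negPos, true_and, hsum, pow_succ', ← mul_sum]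
  zify
  lia

theorem ncard_diffPairs_two_mul (n m : ℕ) :
    (diffPairs n (2 * m)).ncard = signedBinaryCount n m := by
  have hrange : diffPairs n (2 * m) ⊆ Set.range negPos := by
    rw [range_negPos]
    exact fun p hp => hp.1
  rw [← Set.ncard_preimage_of_injective_subset_range negPos_injective hrange, signedBinaryCount,
    ← Set.ncard_coe_finset]
  congr 1
  ext s
  simp [negPos_mem_diffPairs_two_mul_iff]

theorem three_mul_qn_of_odd {n : ℕ} (hn : Odd n) : 3 * qn n = 2 ^ n + 1 := by
  have hdvd : 2 + 1 ∣ 2 ^ n + 1 := by simpa using hn.nat_add_dvd_pow_add_pow 2 1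
  rw [qn, if_pos (Nat.odd_iff.1 hn), Nat.mul_div_cancel' hdvd]

theorem three_mul_qn_add_one_of_even {n : ℕ} (hn : Even n) : 3 * qn n + 1 = 2 ^ n := by
  have hdvd : 3 ∣ 2 ^ n - 1 := by
    obtain ⟨k, rfl⟩ := hn.two_dvd
    simpa [pow_mul] using Nat.sub_dvd_pow_sub_pow 4 1 k
  have hpos : 1 ≤ 2 ^ n := Nat.one_le_two_pow
  rw [qn, if_neg (by simpa [← Nat.odd_iff] using hn), Nat.mul_div_cancel' hdvd,
    Nat.sub_add_cancel hpos]

theorem qn_succ_add_one_of_odd {n : ℕ} (hn : Odd n) : qn (n + 1) + 1 = 2 * qn n := by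
  have h := three_mul_qn_of_odd hn
  have hsucc := three_mul_qn_add_one_of_even hn.add_one
  lia

theorem qn_succ_of_even {n : ℕ} (hn : Even n) : qn (n + 1) = 2 * qn n + 1 := by
  have h := three_mul_qn_add_one_of_even hn
  have hsucc := three_mul_qn_of_odd hn.add_one
  lia

theorem odd_qn {n : ℕ} (hn : n ≠ 0) : Odd (qn n) := by
  obtain ⟨k, rfl⟩ := Nat.exists_eq_succ_of_ne_zero hn
  rcases k.even_or_odd with hk | hk
  · exact ⟨qn k, qn_succ_of_even hk⟩
  · have h := qn_succ_add_one_of_odd hk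
    exact Nat.odd_iff.2 (by lia)

theorem gfun_eq_signedBinaryCount {n k : ℕ} (hk : qn n = 2 * k + 1) :
    gfun n = signedBinaryCount n (k + 1) := by
  rw [gfun, hk]
  exact_mod_cast ncard_diffPairs_two_mul n (k + 1)

theorem hfun_eq_signedBinaryCount {n k : ℕ} (hk : qn n = 2 * k + 1) :
    hfun n = signedBinaryCount n k := by
  rw [hfun, hk, Nat.add_sub_cancel, ncard_diffPairs_two_mul]

theorem exists_qn_eq_of_odd {n : ℕ} (hn : Odd n) :
    ∃ k, qn n = 2 * k + 1 ∧ qn (n + 1) = 2 * (2 * k) + 1 := by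
  obtain ⟨k, hk⟩ := odd_qn hn.pos.ne'
  have hsucc := qn_succ_add_one_of_odd hn
  exact ⟨k, hk, by lia⟩

theorem exists_qn_eq_of_even {n : ℕ} (hn : n ≠ 0) (he : Even n) :
    ∃ k, qn n = 2 * k + 1 ∧ qn (n + 1) = 2 * (2 * k + 1) + 1 := by
  obtain ⟨k, hk⟩ := odd_qn hn
  exact ⟨k, hk, hk ▸ qn_succ_of_even he⟩

theorem gfun_succ_of_odd {n : ℕ} (hn : Odd n) : gfun (n + 1) = gfun n + hfun n := by
  obtain ⟨k, hk, hsucc⟩ := exists_qn_eq_of_odd hn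
  rw [gfun_eq_signedBinaryCount hsucc, gfun_eq_signedBinaryCount hk, hfun_eq_signedBinaryCount hk]
  exact_mod_cast signedBinaryCount_succ_two_mul_add_one n k

theorem hfun_succ_of_odd {n : ℕ} (hn : Odd n) : hfun (n + 1) = hfun n := by
  obtain ⟨k, hk, hsucc⟩ := exists_qn_eq_of_odd hn
  rw [hfun_eq_signedBinaryCount hsucc, hfun_eq_signedBinaryCount hk]
  exact_mod_cast signedBinaryCount_succ_two_mul n k

theorem gfun_succ_of_even {n : ℕ} (hn : n ≠ 0) (he : Even n) : gfun (n + 1) = gfun n := by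
  obtain ⟨k, hk, hsucc⟩ := exists_qn_eq_of_even hn he
  rw [gfun_eq_signedBinaryCount hsucc, gfun_eq_signedBinaryCount hk]
  exact_mod_cast signedBinaryCount_succ_two_mul n (k + 1)

theorem hfun_succ_of_even {n : ℕ} (hn : n ≠ 0) (he : Even n) :
    hfun (n + 1) = gfun n + hfun n := by
  obtain ⟨k, hk, hsucc⟩ := exists_qn_eq_of_even hn he
  rw [hfun_eq_signedBinaryCount hsucc, gfun_eq_signedBinaryCount hk, hfun_eq_signedBinaryCount hk]
  exact_mod_cast signedBinaryCount_succ_two_mul_add_one n k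

/-- Recurrence relations for `g_n` and `h_n`: for odd `n ≥ 3`,
`g_{n+1} = g_n + h_n` and `h_{n+1} = h_n`; for even `n ≥ 4`,
`g_{n+1} = g_n` and `h_{n+1} = g_n + h_n`. -/
theorem stmt10 (n : ℕ) :
    (3 ≤ n → Odd n → gfun (n + 1) = gfun n + hfun n ∧ hfun (n + 1) = hfun n) ∧
    (4 ≤ n → Even n → gfun (n + 1) = gfun n ∧ hfun (n + 1) = gfun n + hfun n) :=
  ⟨fun _ ho => ⟨gfun_succ_of_odd ho, hfun_succ_of_odd ho⟩,
    fun hn he => ⟨gfun_succ_of_even (by lia) he, hfun_succ_of_even (by lia) he⟩⟩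
end

section
/- Let ≼ be a comparative probability order on [n] and let s be a positive integer such that ∑_{i=0}^{s} 2^i · C(n,i) ≥ 2ⁿ − 1, where C(n,i) is the binomial coefficient. Then the number of flippable pairs of ≼ is at most ∑_{i=0}^{s} C(n,i). -/
/-!
Complementation inside `A ∪ B` reverses the order, so a critical pair is the middle pair of the
decompositions of `A ∪ B` into two parts: it is determined by its union, equivalently by the
complement `V` of that union. If the pair is flippable, each of the `2 ^ #V` sets `A ∪ D` with
`D ⊆ V` has `B ∪ D` as its immediate successor, and such a pair of neighbours gives back
`A`, `B`, `D` as its differences and its intersection. Only the last of the `2 ^ n` subsets has no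
successor, so the weights `2 ^ #V` of the flippable pairs, which belong to distinct sets `V`, add
up to at most `2 ^ n - 1`. A family of subsets of bounded total weight is largest when it takes
the subsets of smallest weight, that is, of smallest cardinality.
-/

open Finset

theorem card_le_card_of_sum_le_sum {ι M : Type*} [DecidableEq ι] [AddCommMonoid M]
    [LinearOrder M] [IsOrderedCancelAddMonoid M] {s t : Finset ι} {w : ι → M} {c : M}
    (hc : 0 < c) (hs : ∀ i ∈ s \ t, c ≤ w i) (ht : ∀ i ∈ t \ s, w i ≤ c)
    (hst : ∑ i ∈ s, w i ≤ ∑ i ∈ t, w i) : #s ≤ #t := by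
  have h : #(s \ t) • c ≤ #(t \ s) • c :=
    calc
      #(s \ t) • c ≤ ∑ i ∈ s \ t, w i := card_nsmul_le_sum _ _ _ hs
      _ ≤ ∑ i ∈ t \ s, w i := sum_sdiff_le_sum_sdiff.2 hst
      _ ≤ #(t \ s) • c := sum_le_card_nsmul _ _ _ ht
  exact card_sdiff_le_card_sdiff_iff.1 ((nsmul_le_nsmul_iff_left hc).1 h)

theorem sum_filter_card_lt_apply_card {α M : Type*} [Fintype α] [AddCommMonoid M] (f : ℕ → M)
    (k : ℕ) :
    ∑ V : Finset α with #V < k, f #V = ∑ i ∈ range k, (Fintype.card α).choose i • f i := by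
  rw [← sum_fiberwise_of_maps_to (t := range k) (g := card)
    fun V hV => mem_range.2 (mem_filter.1 hV).2]
  refine sum_congr rfl fun i hi => ?_
  have hfiber : ({V : Finset α | #V < k} : Finset _).filter (#· = i) = powersetCard i univ := by
    ext V
    have := mem_range.1 hi
    simp only [mem_filter, mem_univ, true_and, mem_powersetCard_univ]
    lia
  rw [hfiber, sum_powersetCard, card_univ]

theorem card_filter_card_lt (α : Type*) [Fintype α] (k : ℕ) :
    #{V : Finset α | #V < k} = ∑ i ∈ range k, (Fintype.card α).choose i := by
  simpa only [← card_eq_sum_ones, smul_eq_mul, mul_one] using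
    sum_filter_card_lt_apply_card (α := α) (M := ℕ) (fun _ => 1) k

theorem card_le_sum_choose_of_sum_two_pow_card_le {α : Type*} [Fintype α]
    {G : Finset (Finset α)} {s : ℕ}
    (hG : ∑ V ∈ G, 2 ^ #V ≤ ∑ i ∈ range (s + 1), 2 ^ i * (Fintype.card α).choose i) :
    #G ≤ ∑ i ∈ range (s + 1), (Fintype.card α).choose i := by
  classical
  rw [← card_filter_card_lt]
  refine card_le_card_of_sum_le_sum (w := fun V => 2 ^ #V) (c := 2 ^ s) (by positivity)
    (fun V hV => ?_) (fun V hV => ?_) ?_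
  · simp only [mem_sdiff, mem_filter, mem_univ, true_and] at hV
    exact Nat.pow_le_pow_right two_pos (by lia)
  · simp only [mem_sdiff, mem_filter, mem_univ, true_and] at hV
    exact Nat.pow_le_pow_right two_pos (by lia)
  · simpa only [sum_filter_card_lt_apply_card (2 ^ ·), smul_eq_mul, mul_comm] using hG

theorem union_sdiff_union_right_of_disjoint {α : Type*} [DecidableEq α] {A B D : Finset α}
    (hAB : Disjoint A B) (hAD : Disjoint A D) : (A ∪ D) \ (B ∪ D) = A := by
  rw [union_sdiff_distrib, sdiff_eq_self_of_disjoint (disjoint_union_right.2 ⟨hAB, hAD⟩),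
    sdiff_eq_empty_iff_subset.2 subset_union_right, union_empty]

theorem union_inter_union_right_of_disjoint {α : Type*} [DecidableEq α] {A B D : Finset α}
    (hAB : Disjoint A B) : (A ∪ D) ∩ (B ∪ D) = D := by
  rw [← inter_union_distrib_right, disjoint_iff_inter_eq_empty.1 hAB, empty_union]

section Order

variable {n : ℕ} {le : Finset (Fin n) → Finset (Fin n) → Prop} {A B C D V X Y : Finset (Fin n)}
  {A' B' D' Y' : Finset (Fin n)}

/-- De Finetti's axiom, the last clause of `IsCPO`, as a property of an arbitrary relation on the
subsets of `[n]`. -/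
def DeFinetti (le : Finset (Fin n) → Finset (Fin n) → Prop) : Prop :=
  ∀ A B C : Finset (Fin n), Disjoint (A ∪ B) C → (le A B ↔ le (A ∪ C) (B ∪ C))

/-- The covering relation of the order `le`: `Y` is an immediate successor of `X`. The definition
of `Critical le A B` unfolds to `Disjoint A B ∧ cpCovBy le A B`. -/
def cpCovBy (le : Finset (Fin n) → Finset (Fin n) → Prop) (X Y : Finset (Fin n)) : Prop :=
  cpLT le X Y ∧ ¬ ∃ C, cpLT le X C ∧ cpLT le C Y

theorem IsCPO.isLinearOrder (h : IsCPO le) : IsLinearOrder (Finset (Fin n)) le where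
  refl A := (h.1 A A).elim id id
  trans := h.2.2.1
  antisymm := h.2.1
  total := h.1

theorem IsCPO.deFinetti (h : IsCPO le) : DeFinetti le := h.2.2.2.2

theorem DeFinetti.sdiff_iff (h : DeFinetti le) : le (A \ B) (B \ A) ↔ le A B := by
  have hdisj : Disjoint (A \ B ∪ B \ A) (A ∩ B) :=
    disjoint_union_left.2 ⟨disjoint_sdiff_inter A B, inter_comm A B ▸ disjoint_sdiff_inter B A⟩
  have hB : B \ A ∪ A ∩ B = B := inter_comm A B ▸ sdiff_union_inter B A
  simpa only [sdiff_union_inter, hB] using h _ _ _ hdisj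

theorem DeFinetti.compl_iff (h : DeFinetti le) (hA : A ⊆ V) (hB : B ⊆ V) :
    le (V \ B) (V \ A) ↔ le A B := by
  rw [← h.sdiff_iff, sdiff_sdiff_sdiff_cancel_left hA, sdiff_sdiff_sdiff_cancel_left hB,
    h.sdiff_iff]

theorem cpCovBy.le_of_cpLT [Std.Total le] (h : cpCovBy le X Y) (hC : cpLT le X C) : le Y C := by
  rcases total_of le Y C with hYC | hCY
  · exact hYC
  · by_cases hne : C = Y
    · exact hne ▸ refl_of le C
    · exact absurd ⟨C, hC, hCY, hne⟩ h.2

theorem cpCovBy.unique_right [Std.Total le] [Std.Antisymm le] (h : cpCovBy le X Y)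
    (h' : cpCovBy le X Y') : Y = Y' :=
  antisymm_of le (h.le_of_cpLT h'.1) (h'.le_of_cpLT h.1)

theorem exists_forall_not_cpLT (le : Finset (Fin n) → Finset (Fin n) → Prop)
    [IsLinearOrder (Finset (Fin n)) le] : ∃ M, ∀ Y, ¬ cpLT le M Y := by
  obtain ⟨M, hM⟩ := (Std.Total.directed (r := le) id).finite_le id
  exact ⟨M, fun Y hMY => hMY.2 (antisymm_of le hMY.1 (hM Y))⟩

theorem Critical.left_eq_of_le [IsLinearOrder (Finset (Fin n)) le] (hadd : DeFinetti le)
    (h : Critical le A B) (h' : Critical le A' B') (hU : A ∪ B = A' ∪ B') (hle : le A A') :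
    A = A' := by
  by_contra hne
  have hBA' : le B A' := cpCovBy.le_of_cpLT h.2 ⟨hle, hne⟩
  have hB'B : le B' B := by
    rw [← union_sdiff_cancel_left h.1, ← union_sdiff_cancel_left h'.1, ← hU]
    exact (hadd.compl_iff subset_union_left (hU ▸ subset_union_left)).2 hle
  exact h'.2.1.2 (antisymm_of le h'.2.1.1 (trans_of le hB'B hBA'))

theorem Critical.eq_of_union_eq [IsLinearOrder (Finset (Fin n)) le] (hadd : DeFinetti le)
    (h : Critical le A B) (h' : Critical le A' B') (hU : A ∪ B = A' ∪ B') :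
    A = A' ∧ B = B' := by
  have hA : A = A' := (total_of le A A').elim (h.left_eq_of_le hadd h' hU)
    fun hle => (h'.left_eq_of_le hadd h hU.symm hle).symm
  refine ⟨hA, ?_⟩
  rw [← union_sdiff_cancel_left h.1, ← union_sdiff_cancel_left h'.1, hU, hA]

theorem Flippable.cpCovBy_union (hadd : DeFinetti le) (h : Flippable le A B)
    (hD : Disjoint D (A ∪ B)) : cpCovBy le (A ∪ D) (B ∪ D) := by
  have hle : le (A ∪ D) (B ∪ D) := (hadd A B D hD.symm).1 h.1.2.1.1
  have hne : A ∪ D ≠ B ∪ D := fun heq => h.1.2.1.2 <| by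
    obtain ⟨hDA, hDB⟩ := disjoint_union_right.1 hD
    rw [← union_sdiff_cancel_right hDA.symm, heq, union_sdiff_cancel_right hDB.symm]
  exact ⟨⟨hle, hne⟩, h.2 D hD⟩

theorem Flippable.eq_of_union_eq_union [IsLinearOrder (Finset (Fin n)) le] (hadd : DeFinetti le)
    (h : Flippable le A B) (hD : Disjoint D (A ∪ B)) (h' : Flippable le A' B')
    (hD' : Disjoint D' (A' ∪ B')) (hX : A ∪ D = A' ∪ D') : A = A' ∧ B = B' ∧ D = D' := by
  have hY : B ∪ D = B' ∪ D' :=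
    (h.cpCovBy_union hadd hD).unique_right (hX ▸ h'.cpCovBy_union hadd hD')
  obtain ⟨hDA, hDB⟩ := disjoint_union_right.1 hD
  obtain ⟨hDA', hDB'⟩ := disjoint_union_right.1 hD'
  refine ⟨?_, ?_, ?_⟩
  · rw [← union_sdiff_union_right_of_disjoint h.1.1 hDA.symm, hX, hY,
      union_sdiff_union_right_of_disjoint h'.1.1 hDA'.symm]
  · rw [← union_sdiff_union_right_of_disjoint h.1.1.symm hDB.symm, hX, hY,
      union_sdiff_union_right_of_disjoint h'.1.1.symm hDB'.symm]
  · rw [← union_inter_union_right_of_disjoint (D := D) h.1.1, hX, hY,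
      union_inter_union_right_of_disjoint h'.1.1]

theorem sum_two_pow_card_compl_le [IsLinearOrder (Finset (Fin n)) le] (hadd : DeFinetti le)
    {F : Finset (Finset (Fin n) × Finset (Fin n))} (hF : ∀ p ∈ F, Flippable le p.1 p.2) :
    ∑ p ∈ F, 2 ^ #(p.1 ∪ p.2)ᶜ ≤ 2 ^ n - 1 := by
  obtain ⟨M, hM⟩ := exists_forall_not_cpLT le
  let P := F.sigma fun p => (p.1 ∪ p.2)ᶜ.powerset
  have hP : ∀ x ∈ P, Flippable le x.1.1 x.1.2 ∧ Disjoint x.2 (x.1.1 ∪ x.1.2) := fun x hx => by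
    obtain ⟨hp, hD⟩ := mem_sigma.1 hx
    exact ⟨hF _ hp, subset_compl_iff_disjoint_right.1 (mem_powerset.1 hD)⟩
  have hmaps : ∀ x ∈ P, x.1.1 ∪ x.2 ∈ univ.erase M := fun x hx =>
    mem_erase.2 ⟨fun hxM => hM _ (hxM ▸ ((hP x hx).1.cpCovBy_union hadd (hP x hx).2).1),
      mem_univ _⟩
  have hinj : Set.InjOn (fun x : Σ _ : Finset (Fin n) × Finset (Fin n), Finset (Fin n) =>
      x.1.1 ∪ x.2) P := by
    rintro ⟨⟨A, B⟩, D⟩ hx ⟨⟨A', B'⟩, D'⟩ hx' hX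
    obtain ⟨hflip, hD⟩ := hP _ hx
    obtain ⟨hflip', hD'⟩ := hP _ hx'
    obtain ⟨rfl, rfl, rfl⟩ := hflip.eq_of_union_eq_union hadd hD hflip' hD' hX
    rfl
  calc
    ∑ p ∈ F, 2 ^ #(p.1 ∪ p.2)ᶜ = #P := by simp only [P, card_sigma, card_powerset]
    _ ≤ #(univ.erase M) := card_le_card_of_injOn _ hmaps hinj
    _ = 2 ^ n - 1 := by
      rw [card_erase_of_mem (mem_univ M), card_univ, Fintype.card_finset, Fintype.card_fin]

theorem stmt12_general (le : Finset (Fin n) → Finset (Fin n) → Prop)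
    [IsLinearOrder (Finset (Fin n)) le] (hadd : DeFinetti le) (s : ℕ)
    (hsum : 2 ^ n - 1 ≤ ∑ i ∈ range (s + 1), 2 ^ i * n.choose i) :
    (FlippablePairs le).ncard ≤ ∑ i ∈ range (s + 1), n.choose i := by
  let F := (FlippablePairs le).toFinite.toFinset
  have hF : ∀ p ∈ F, Flippable le p.1 p.2 := fun _ => (Set.Finite.mem_toFinset _).1
  have hinj : Set.InjOn (fun p : Finset (Fin n) × Finset (Fin n) => (p.1 ∪ p.2)ᶜ) F :=
    fun p hp q hq hpq => Prod.ext_iff.2 <|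
      (hF p hp).1.eq_of_union_eq hadd (hF q hq).1 (compl_injective hpq)
  have hweight : ∑ V ∈ F.image (fun p => (p.1 ∪ p.2)ᶜ), 2 ^ #V ≤ 2 ^ n - 1 := by
    rw [sum_image hinj]
    exact sum_two_pow_card_compl_le hadd hF
  rw [Set.ncard_eq_toFinset_card _, ← card_image_of_injOn hinj]
  simpa only [Fintype.card_fin] using card_le_sum_choose_of_sum_two_pow_card_le
    (α := Fin n) (by simpa only [Fintype.card_fin] using hweight.trans hsum)

end Order

/-- If `s ≥ 1` satisfies `∑_{i=0}^s 2^i C(n,i) ≥ 2^n − 1`, then any comparative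
probability order on `[n]` has at most `∑_{i=0}^s C(n,i)` flippable pairs. -/
theorem stmt12 {n : ℕ} (le : Finset (Fin n) → Finset (Fin n) → Prop) (h : IsCPO le)
    (s : ℕ) (hs : 0 < s)
    (hsum : 2 ^ n - 1 ≤ ∑ i ∈ Finset.range (s + 1), 2 ^ i * n.choose i) :
    (FlippablePairs le).ncard ≤ ∑ i ∈ Finset.range (s + 1), n.choose i := by
  have := h.isLinearOrder
  exact stmt12_general le h.deFinetti s hsum
end

section
/- Let ≼ be a comparative probability order on [n] and let (A,B) be a flippable pair of ≼. Then A and B are complements within D = A∪B, and A is the 2^{|D|−1}-th smallest subset of D in the restriction of ≼ to subsets of D; that is, the number of subsets C ⊆ D with C ≼ A equals 2^{|D|−1}. -/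
open Finset

/-!
Complementation in `D = A ∪ B` reverses `≼` on the subsets of `D` and swaps `A` with `B`, so
`C ≼ A` exactly when `B ≼ D \ C`. As nothing lies strictly between `A` and `B`, this says
`¬ D \ C ≼ A`: complementation matches the subsets of `D` that are `≼ A` with those that are not,
and each kind makes up half of the `2 ^ |D|` subsets.
-/

section DeFinetti

variable {β : Type*} [GeneralizedBooleanAlgebra β] {le : β → β → Prop} {a b d : β}

/-- De Finetti's axiom: comparisons are unchanged by joining a disjoint element to both sides.
It is stated in a generalized Boolean algebra because its consequences only use relative
complements. -/
def SatisfiesDeFinetti (le : β → β → Prop) : Prop :=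
  ∀ a b c, Disjoint (a ⊔ b) c → (le a b ↔ le (a ⊔ c) (b ⊔ c))

theorem SatisfiesDeFinetti.le_iff_sdiff_le_sdiff (hle : SatisfiesDeFinetti le) :
    le a b ↔ le (a \ b) (b \ a) := by
  have hdisj : Disjoint (a \ b ⊔ b \ a) (a ⊓ b) :=
    disjoint_sup_left.2 ⟨disjoint_inf_sdiff.symm, inf_comm b a ▸ disjoint_inf_sdiff.symm⟩
  have hb : b \ a ⊔ a ⊓ b = b := by rw [inf_comm, sup_sdiff_inf]
  rw [hle _ _ _ hdisj, sup_sdiff_inf, hb]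

theorem SatisfiesDeFinetti.sdiff_le_sdiff_iff (hle : SatisfiesDeFinetti le)
    (ha : a ≤ d) (hb : b ≤ d) : le (d \ b) (d \ a) ↔ le a b := by
  rw [hle.le_iff_sdiff_le_sdiff, sdiff_sdiff_sdiff_cancel_left ha,
    sdiff_sdiff_sdiff_cancel_left hb, ← hle.le_iff_sdiff_le_sdiff]

end DeFinetti

section Adjacent

variable {β : Type*} {le : β → β → Prop} {a b : β}

/-- `b` is an immediate successor of `a`. The strict relation `x ≺ y` is encoded as `¬ le y x`,
the strict part of a total preorder, so ties between distinct elements are allowed. -/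
def Adjacent (le : β → β → Prop) (a b : β) : Prop :=
  ¬ le b a ∧ ¬ ∃ c, ¬ le c a ∧ ¬ le b c

theorem Adjacent.le_iff_not_le [IsTrans β le] (hab : Adjacent le a b) (c : β) :
    le b c ↔ ¬ le c a := by
  obtain ⟨hlt, hgap⟩ := hab
  refine ⟨fun hbc hca ↦ hlt (trans_of le hbc hca), fun hca ↦ ?_⟩
  by_contra hbc
  exact hgap ⟨c, hca, hbc⟩

theorem Adjacent.le_iff_not_sdiff_le [GeneralizedBooleanAlgebra β] [IsTrans β le]
    (hab : Adjacent le a b) (hle : SatisfiesDeFinetti le) (hdisj : Disjoint a b)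
    {c : β} (hc : c ≤ a ⊔ b) : le c a ↔ ¬ le ((a ⊔ b) \ c) a :=
  calc
    le c a ↔ le ((a ⊔ b) \ a) ((a ⊔ b) \ c) := (hle.sdiff_le_sdiff_iff hc le_sup_left).symm
    _ ↔ le b ((a ⊔ b) \ c) := by rw [hdisj.sup_sdiff_cancel_left]
    _ ↔ ¬ le ((a ⊔ b) \ c) a := hab.le_iff_not_le _

end Adjacent

section Counting

variable {α : Type*} [DecidableEq α] {D : Finset α} {p : Finset α → Prop}

theorem card_filter_eq_card_filter_not_of_iff_not_sdiff [DecidablePred p]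
    (hp : ∀ C ⊆ D, p C ↔ ¬ p (D \ C)) :
    #{C ∈ D.powerset | p C} = #{C ∈ D.powerset | ¬ p C} := by
  have hmem (C : Finset α) : D \ C ∈ D.powerset := mem_powerset.2 sdiff_subset
  have hinv {C : Finset α} (hC : C ∈ D.powerset) : D \ (D \ C) = C :=
    Finset.sdiff_sdiff_eq_self (mem_powerset.1 hC)
  refine card_nbij' (D \ ·) (D \ ·) (fun C hC ↦ ?_) (fun C hC ↦ ?_)
    (fun C hC ↦ hinv (mem_filter.1 hC).1) (fun C hC ↦ hinv (mem_filter.1 hC).1)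
  · obtain ⟨hCD, hpC⟩ := mem_filter.1 hC
    exact mem_filter.2 ⟨hmem C, (hp C (mem_powerset.1 hCD)).1 hpC⟩
  · obtain ⟨hCD, hpC⟩ := mem_filter.1 hC
    exact mem_filter.2 ⟨hmem C, not_not.1 (mt (hp C (mem_powerset.1 hCD)).2 hpC)⟩

theorem ncard_subsets_eq_two_pow_of_iff_not_sdiff (hp : ∀ C ⊆ D, p C ↔ ¬ p (D \ C)) :
    {C | C ⊆ D ∧ p C}.ncard = 2 ^ (#D - 1) := by
  classical
  have hD : D.Nonempty := by
    rw [nonempty_iff_ne_empty]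
    rintro rfl
    have hempty : p ∅ ↔ ¬ p ∅ := hp ∅ Subset.rfl
    exact iff_not_self hempty
  have hset : {C | C ⊆ D ∧ p C} = ({C ∈ D.powerset | p C} : Finset (Finset α)) := by
    simp only [coe_filter, mem_powerset]
  have hhalf : 2 * #{C ∈ D.powerset | p C} = 2 * 2 ^ (#D - 1) :=
    calc
      2 * #{C ∈ D.powerset | p C}
          = #{C ∈ D.powerset | p C} + #{C ∈ D.powerset | ¬ p C} := by
        rw [← card_filter_eq_card_filter_not_of_iff_not_sdiff hp, two_mul]
      _ = 2 ^ #D := by rw [card_filter_add_card_filter_not, card_powerset]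
      _ = 2 * 2 ^ (#D - 1) := (mul_pow_sub_one hD.card_ne_zero 2).symm
  rw [hset, Set.ncard_coe_finset]
  exact Nat.eq_of_mul_eq_mul_left two_pos hhalf

end Counting

section ComparativeProbability

variable {n : ℕ} {le : Finset (Fin n) → Finset (Fin n) → Prop} {A B : Finset (Fin n)}

theorem IsCPO.isTrans (h : IsCPO le) : IsTrans (Finset (Fin n)) le :=
  ⟨h.2.2.1⟩

theorem IsCPO.satisfiesDeFinetti (h : IsCPO le) : SatisfiesDeFinetti le :=
  h.2.2.2.2

theorem IsCPO.cpLT_iff_not_le (h : IsCPO le) : cpLT le A B ↔ ¬ le B A := by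
  obtain ⟨htotal, hantisymm, -⟩ := h
  refine ⟨fun ⟨hAB, hne⟩ hBA ↦ hne (hantisymm A B hAB hBA), fun hBA ↦ ?_⟩
  have hAB : le A B := (htotal A B).resolve_right hBA
  exact ⟨hAB, fun heq ↦ hBA (heq ▸ hAB)⟩

theorem Critical.adjacent (hc : Critical le A B) (h : IsCPO le) : Adjacent le A B := by
  simpa only [Adjacent, h.cpLT_iff_not_le] using hc.2

end ComparativeProbability

theorem stmt14_general {α : Type*} [DecidableEq α] {le : Finset α → Finset α → Prop}
    [IsTrans (Finset α) le] (hle : SatisfiesDeFinetti le) {A B : Finset α}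
    (hdisj : Disjoint A B) (hAB : Adjacent le A B) :
    B = (A ∪ B) \ A ∧ {C : Finset α | C ⊆ A ∪ B ∧ le C A}.ncard = 2 ^ (#(A ∪ B) - 1) :=
  ⟨(union_sdiff_cancel_left hdisj).symm,
    ncard_subsets_eq_two_pow_of_iff_not_sdiff fun _ hC ↦ hAB.le_iff_not_sdiff_le hle hdisj hC⟩

/-- If `(A,B)` is a flippable pair then `A` and `B` are complements in
`D = A ∪ B`, and `A` is the `2^(|D|−1)`-th smallest subset of `D` in the
restriction of `≼` to subsets of `D`. -/
theorem stmt14 {n : ℕ} (le : Finset (Fin n) → Finset (Fin n) → Prop) (h : IsCPO le)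
    (A B : Finset (Fin n)) (hf : Flippable le A B) :
    B = (A ∪ B) \ A ∧
    {C : Finset (Fin n) | C ⊆ A ∪ B ∧ le C A}.ncard = 2 ^ ((A ∪ B).card - 1) := by
  have := h.isTrans
  exact stmt14_general h.satisfiesDeFinetti hf.1.1 (hf.1.adjacent h)
end
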